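/- arXiv:2509.00556 — 2 statements merged into one kernel-verified Lean document; each statement's English description precedes it below -/
import Mathlib

section
/- Two finite subsets S, T ⊆ 𝔽₂ⁿ are affinely equivalent if and only if dim E(S) = dim E(T) = r for some r and there exist a basis X₁, …, X_r of E(S), a basis Y₁, …, Y_r of E(T), and an invertible linear map N : 𝔽₂^r → 𝔽₂^r such that |v_X(a)| = |v_Y(N a)| for every a ∈ 𝔽₂^r (i.e., there is a cardinality-preserving linear bijection between the Venn regions of S with respect to E(S) and those of T with respect to E(T)). -/
/-!
Subsets of `V = 𝔽₂ⁿ` are encoded by their indicator functions `V → ZMod 2`, which turns symmetric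
difference into addition, `zSet X` into the linear combination of the indicators of the `X i`, and
`E(S)` into the linear subspace `relSpace S` of functions supported on `S` that satisfy
`∑ c x = 0` and `∑ c x • x = 0`.

For the forward direction, a basis of `relSpace S` is transported by the affine bijection, and
`N = id` works.

For the converse, the Venn region containing `x` is recorded by `label X x ∈ 𝔽₂^r`. Equality of
the cardinalities of regions yields a bijection `φ : S ≃ T` with
`label Y (φ x) = N (label X x)`. Since the indicator of `zSet X a` at `x` is the linear functional
`a` evaluated at `label X x`, the map `φ` carries members of `E(S)` to members of `E(T)`, and
likewise for `φ⁻¹` (`transfer`). Fix `s₀ ∈ S`. Every linear relation between the vectors `x - s₀`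
becomes an element of `E(S)` after adjusting the (irrelevant) coefficient of `s₀`, so the families
`x - s₀` and `φ x - φ s₀` satisfy the same linear relations. Hence a linear automorphism of `V`
carries one family to the other (`exists_equiv_of_ker_eq`).
-/

open scoped symmDiff

/-- `zSet X a` is the symmetric difference of the sets `X i` over the indices `i` with
`a i = 1` (with `zSet X 0 = ∅`). -/
def zSet {α : Type*} [DecidableEq α] {r : ℕ} (X : Fin r → Finset α)
    (a : Fin r → ZMod 2) : Finset α :=
  (Finset.univ.filter (fun i => a i = 1)).fold (· ∆ ·) ∅ X

/-- The Venn region of `S` with respect to `X₁, …, X_r` determined by `a ∈ 𝔽₂^r`. -/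
def vennRegion {α : Type*} [DecidableEq α] {r : ℕ} (S : Finset α)
    (X : Fin r → Finset α) (a : Fin r → ZMod 2) : Finset α :=
  S.filter (fun x => ∀ i, x ∈ X i ↔ a i = 1)

/-- `E(S)`: the collection of all even zero-sum subsets of `S ⊆ 𝔽₂ⁿ`. -/
def evenZeroSums {n : ℕ} (S : Finset (Fin n → ZMod 2)) :
    Set (Finset (Fin n → ZMod 2)) :=
  {X | X ⊆ S ∧ Even X.card ∧ (∑ x ∈ X, x) = 0}

/-- The indicator function of a finite set, with values in `𝔽₂`. -/
def ind {α : Type*} [DecidableEq α] (A : Finset α) : α → ZMod 2 :=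
  fun x => if x ∈ A then 1 else 0

lemma ind_eq_one {α : Type*} [DecidableEq α] {A : Finset α} {x : α} :
    ind A x = 1 ↔ x ∈ A := by
  simp [ind]

lemma ind_injective {α : Type*} [DecidableEq α] :
    Function.Injective (ind : Finset α → α → ZMod 2) := by
  intro A B h
  ext x
  rw [← ind_eq_one, ← ind_eq_one, h]

lemma ind_symmDiff {α : Type*} [DecidableEq α] (A B : Finset α) :
    ind (A ∆ B) = ind A + ind B := by
  ext x
  have h2 : (1 : ZMod 2) + 1 = 0 := by decide
  by_cases hA : x ∈ A <;> by_cases hB : x ∈ B <;> simp [ind, Finset.mem_symmDiff, hA, hB, h2]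

lemma zmod_two_cases (c : ZMod 2) : c = 0 ∨ c = 1 := by
  revert c; decide

lemma zmod_two_eq_iff {b c : ZMod 2} : b = c ↔ (b = 1 ↔ c = 1) := by
  revert b c; decide

lemma ind_zSet {α : Type*} [DecidableEq α] {r : ℕ} (X : Fin r → Finset α)
    (a : Fin r → ZMod 2) : ind (zSet X a) = ∑ i, a i • ind (X i) := by
  have key : ∀ s : Finset (Fin r),
      ind (s.fold (· ∆ ·) ∅ X : Finset α) = ∑ i ∈ s, ind (X i) := by
    intro s
    induction s using Finset.induction_on with
    | empty => ext x; simp [ind]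
    | insert i s hi ih => rw [Finset.fold_insert hi, ind_symmDiff, ih, Finset.sum_insert hi]
  rw [zSet, key, Finset.sum_filter]
  refine Finset.sum_congr rfl fun i _ => ?_
  rcases zmod_two_cases (a i) with h | h <;> simp [h]

/-- The indicator functions of the members of `E(S)`, as a linear subspace of `V → 𝔽₂`. -/
def relSpace {n : ℕ} (S : Finset (Fin n → ZMod 2)) :
    Submodule (ZMod 2) ((Fin n → ZMod 2) → ZMod 2) where
  carrier := {c | (∀ x ∉ S, c x = 0) ∧ ∑ x ∈ S, c x = 0 ∧ ∑ x ∈ S, c x • x = 0}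
  zero_mem' := by simp
  add_mem' := by
    rintro c d ⟨h1, h2, h3⟩ ⟨k1, k2, k3⟩
    refine ⟨fun x hx => by simp [h1 x hx, k1 x hx], ?_, ?_⟩
    · simp [Finset.sum_add_distrib, h2, k2]
    · simp only [Pi.add_apply, add_smul, Finset.sum_add_distrib, h3, k3, add_zero]
  smul_mem' := by
    rintro b c ⟨h1, h2, h3⟩
    refine ⟨fun x hx => by simp [h1 x hx], ?_, ?_⟩
    · simp [← Finset.mul_sum, h2]
    · simp only [Pi.smul_apply, smul_assoc, ← Finset.smul_sum, h3, smul_zero]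

lemma ind_mem_relSpace {n : ℕ} {S A : Finset (Fin n → ZMod 2)} :
    ind A ∈ relSpace S ↔ A ∈ evenZeroSums S := by
  change ((∀ x ∉ S, ind A x = 0) ∧ ∑ x ∈ S, ind A x = 0 ∧ ∑ x ∈ S, ind A x • x = 0) ↔
    (A ⊆ S ∧ Even A.card ∧ ∑ x ∈ A, x = 0)
  have h1 : (∀ x ∉ S, ind A x = 0) ↔ A ⊆ S := by
    simp only [ind, ite_eq_right_iff, one_ne_zero, imp_false, Finset.subset_iff]
    exact forall_congr' fun x => not_imp_not
  rw [h1]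
  refine and_congr_right fun hAS => ?_
  have hf : S.filter (· ∈ A) = A := by
    rw [Finset.filter_mem_eq_inter, Finset.inter_eq_right.2 hAS]
  simp only [ind, ite_smul, one_smul, zero_smul, ← Finset.sum_filter, hf]
  simp [ZMod.natCast_eq_zero_iff_even]

/-! ### Affine equivalence gives matching bases -/

/-- Every function `V → 𝔽₂` is an indicator function. -/
lemma ind_filter {n : ℕ} (c : (Fin n → ZMod 2) → ZMod 2) :
    ind (Finset.univ.filter fun x => c x = 1) = c := by
  ext x
  rw [zmod_two_eq_iff, ind_eq_one]
  simp

lemma exists_basis {n : ℕ} (S : Finset (Fin n → ZMod 2)) :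
    ∃ (r : ℕ) (X : Fin r → Finset (Fin n → ZMod 2)),
      Set.range (zSet X) = evenZeroSums S ∧ Function.Injective (zSet X) := by
  let b := Module.finBasis (ZMod 2) (relSpace S)
  refine ⟨_, fun i => Finset.univ.filter fun x => (b i : (Fin n → ZMod 2) → ZMod 2) x = 1, ?_, ?_⟩
  · ext A
    rw [← ind_mem_relSpace]
    constructor
    · rintro ⟨a, rfl⟩
      rw [ind_zSet]
      simp only [ind_filter]
      exact Submodule.sum_mem _ fun i _ => Submodule.smul_mem _ _ (b i).2
    · intro hA
      refine ⟨b.repr ⟨ind A, hA⟩, ind_injective ?_⟩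
      rw [ind_zSet]
      simp only [ind_filter]
      have := congrArg Subtype.val (b.sum_repr ⟨ind A, hA⟩)
      rwa [Submodule.coe_sum] at this
  · intro a a' h
    have h' := congrArg ind h
    simp only [ind_zSet, ind_filter] at h'
    have h'' : ∑ i, a i • b i = ∑ i, a' i • b i := by
      apply Subtype.ext
      simpa using h'
    have := congrArg b.equivFun h''
    simpa [← Module.Basis.equivFun_symm_apply] using this

lemma zSet_image {n r : ℕ} (f : (Fin n → ZMod 2) ≃ (Fin n → ZMod 2))
    (X : Fin r → Finset (Fin n → ZMod 2)) (a : Fin r → ZMod 2) :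
    zSet (fun i => (X i).image f) a = (zSet X a).image f := by
  apply ind_injective
  have h : ∀ A : Finset (Fin n → ZMod 2), ind (A.image f) = fun x => ind A (f.symm x) := by
    intro A
    ext x
    rw [zmod_two_eq_iff, ind_eq_one, ind_eq_one, Finset.mem_image]
    constructor
    · rintro ⟨y, hy, rfl⟩
      simpa using hy
    · intro hx
      exact ⟨_, hx, by simp⟩
  rw [h, ind_zSet, ind_zSet]
  ext x
  simp [h]

lemma image_mem_evenZeroSums {n : ℕ} (L : (Fin n → ZMod 2) ≃ₗ[ZMod 2] (Fin n → ZMod 2))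
    (c : Fin n → ZMod 2) {S A : Finset (Fin n → ZMod 2)} :
    A.image (fun x => L x + c) ∈ evenZeroSums (S.image fun x => L x + c) ↔
      A ∈ evenZeroSums S := by
  have hinj : Function.Injective fun x => L x + c := fun x y h => L.injective (add_right_cancel h)
  simp only [evenZeroSums, Set.mem_ofPred_eq, Finset.image_subset_image_iff hinj,
    Finset.card_image_of_injective _ hinj, Finset.sum_image hinj.injOn]
  refine and_congr_right fun _ => and_congr_right fun he => ?_
  have hc : A.card • c = 0 := by
    rw [← Nat.cast_smul_eq_nsmul (ZMod 2), ZMod.natCast_eq_zero_iff_even.2 he, zero_smul]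
  rw [Finset.sum_add_distrib, Finset.sum_const, hc, add_zero, ← map_sum L, L.map_eq_zero_iff]

/-! ### Matching bases give an affine equivalence -/

/-- The label of the Venn region of `x` with respect to `X`. -/
def label {α : Type*} [DecidableEq α] {r : ℕ} (X : Fin r → Finset α) (x : α) :
    Fin r → ZMod 2 :=
  fun i => ind (X i) x

lemma vennRegion_eq {α : Type*} [DecidableEq α] {r : ℕ} (S : Finset α)
    (X : Fin r → Finset α) (a : Fin r → ZMod 2) :
    vennRegion S X a = S.filter fun x => label X x = a := by
  refine Finset.filter_congr fun x _ => ?_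
  rw [funext_iff]
  refine forall_congr' fun i => ?_
  rw [label, zmod_two_eq_iff (b := ind (X i) x), ind_eq_one]

lemma exists_equiv_label {n r : ℕ} {S T : Finset (Fin n → ZMod 2)}
    {X Y : Fin r → Finset (Fin n → ZMod 2)}
    (N : (Fin r → ZMod 2) ≃ₗ[ZMod 2] (Fin r → ZMod 2))
    (h : ∀ a, (vennRegion S X a).card = (vennRegion T Y (N a)).card) :
    ∃ φ : S ≃ T, ∀ s : S, label Y (φ s) = N (label X s) := by
  have key : ∀ a, Nonempty ({s : S // N (label X s) = a} ≃ {t : T // label Y t = a}) := by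
    intro a
    have h1 := h (N.symm a)
    rw [vennRegion_eq, vennRegion_eq, N.apply_symm_apply] at h1
    refine ⟨(Equiv.trans ?_ (Finset.equivOfCardEq h1)).trans ?_⟩
    · refine (Equiv.subtypeSubtypeEquivSubtypeInter (· ∈ S) (fun x => N (label X x) = a)).trans
        (Equiv.subtypeEquivRight fun x => ?_)
      rw [Finset.mem_filter, N.eq_symm_apply]
    · exact ((Equiv.subtypeSubtypeEquivSubtypeInter (· ∈ T) (fun x => label Y x = a)).trans
        (Equiv.subtypeEquivRight fun x => by rw [Finset.mem_filter])).symm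
  exact ⟨Equiv.ofFiberEquiv fun a => (key a).some, fun s =>
    Equiv.ofFiberEquiv_map (f := fun s : S => N (label X s)) (g := fun t : T => label Y t)
      (fun a => (key a).some) s⟩

/-- A label-compatible bijection `φ : S ≃ T` carries even zero-sum sets of `S`, given by their
coefficients `c`, to zero-sum sets of `T`. -/
lemma transfer {n r : ℕ} {S T : Finset (Fin n → ZMod 2)}
    {X Y : Fin r → Finset (Fin n → ZMod 2)}
    (hX : Set.range (zSet X) = evenZeroSums S) (hY : Set.range (zSet Y) = evenZeroSums T)
    (N : (Fin r → ZMod 2) ≃ₗ[ZMod 2] (Fin r → ZMod 2))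
    (φ : S ≃ T) (hφ : ∀ s : S, label Y (φ s) = N (label X s))
    (c : S → ZMod 2) (h0 : ∑ s, c s = 0) (h1 : ∑ s, c s • (s : Fin n → ZMod 2) = 0) :
    ∑ s, c s • (φ s : Fin n → ZMod 2) = 0 := by
  let c' : (Fin n → ZMod 2) → ZMod 2 := fun x => if h : x ∈ S then c ⟨x, h⟩ else 0
  have hc' : ∀ s : S, c' s = c s := fun s => by simp [c']
  have hmem : c' ∈ relSpace S := by
    refine ⟨fun x hx => by simp [c', hx], ?_, ?_⟩
    · rw [← Finset.sum_coe_sort]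
      simpa only [hc'] using h0
    · rw [← Finset.sum_coe_sort]
      simpa only [hc'] using h1
  rw [← ind_filter c', ind_mem_relSpace, ← hX] at hmem
  obtain ⟨a, ha⟩ := hmem
  -- The functional `v ↦ a ⬝ N⁻¹ v` has some coordinate vector `a'`, and `φ` maps `zSet X a`
  -- onto `zSet Y a'`.
  let ψ : (Fin r → ZMod 2) →ₗ[ZMod 2] ZMod 2 :=
    (Fintype.linearCombination (ZMod 2) a).comp N.symm.toLinearMap
  let a' : Fin r → ZMod 2 := fun i => ψ fun j => if i = j then 1 else 0
  have hc : ∀ s : S, c s = ind (zSet Y a') (φ s) := by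
    intro s
    have e1 : ind (zSet Y a') (φ s) = ψ (label Y (φ s)) := by
      rw [LinearMap.pi_apply_eq_sum_univ ψ, ind_zSet]
      simp [label, a', mul_comm]
    have e2 : ind (zSet X a) s = ψ (label Y (φ s)) := by
      rw [hφ, ind_zSet]
      simp [ψ, Fintype.linearCombination_apply, label, mul_comm]
    rw [e1, ← e2, ha, ind_filter, hc']
  have hT : ind (zSet Y a') ∈ relSpace T := by
    rw [ind_mem_relSpace, ← hY]
    exact ⟨a', rfl⟩
  have h3 := hT.2.2
  rw [← Finset.sum_coe_sort, ← φ.sum_comp] at h3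
  simpa only [hc] using h3

lemma exists_equiv_of_ker_eq {K W V : Type*} [Field K] [AddCommGroup W] [Module K W]
    [AddCommGroup V] [Module K V] [FiniteDimensional K V] (f g : W →ₗ[K] V)
    (h : LinearMap.ker f = LinearMap.ker g) : ∃ L : V ≃ₗ[K] V, ∀ w, L (f w) = g w := by
  let e : LinearMap.range f ≃ₗ[K] LinearMap.range g :=
    f.quotKerEquivRange.symm ≪≫ₗ Submodule.quotEquivOfEq _ _ h ≪≫ₗ g.quotKerEquivRange
  obtain ⟨L, hL⟩ := Submodule.exists_linearEquiv_restrict_eq e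
  refine ⟨L, fun w => ?_⟩
  have := hL ⟨f w, LinearMap.mem_range_self f w⟩
  rw [← this]
  have h2 : f.quotKerEquivRange.symm ⟨f w, LinearMap.mem_range_self f w⟩ =
      (LinearMap.ker f).mkQ w := by
    rw [LinearEquiv.symm_apply_eq]
    rfl
  simp only [e, LinearEquiv.trans_apply, h2]
  rfl

/-- The linear relations between the vectors `s - s₀` also hold between the `φ s - φ s₀`. -/
lemma ker_le {n : ℕ} {S T : Finset (Fin n → ZMod 2)} (φ : S ≃ T)
    (htr : ∀ c : S → ZMod 2, ∑ s, c s = 0 → ∑ s, c s • (s : Fin n → ZMod 2) = 0 →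
      ∑ s, c s • (φ s : Fin n → ZMod 2) = 0) (s₀ : S) (c : S → ZMod 2)
    (h : ∑ s, c s • ((s : Fin n → ZMod 2) - s₀) = 0) :
    ∑ s, c s • ((φ s : Fin n → ZMod 2) - φ s₀) = 0 := by
  -- The coefficient of `s₀` is changed so that the coefficients sum to zero.
  let d : S → ZMod 2 := c - Pi.single s₀ (∑ s, c s)
  have hd0 : ∑ s, d s = 0 := by simp [d]
  have hd : ∀ u : S → Fin n → ZMod 2, ∑ s, d s • u s = ∑ s, c s • (u s - u s₀) := by
    intro u
    simp only [d, Pi.sub_apply, sub_smul, smul_sub, Finset.sum_sub_distrib, Pi.single_apply,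
      ite_smul, zero_smul, Finset.sum_ite_eq', Finset.mem_univ, if_true, Finset.sum_smul]
  rw [← hd fun s => (φ s : Fin n → ZMod 2)]
  apply htr d hd0
  rw [hd fun s => (s : Fin n → ZMod 2)]
  exact h

/-- Two finite subsets `S, T ⊆ 𝔽₂ⁿ` are affinely equivalent if and only if
`dim E(S) = dim E(T) = r` for some `r` and there are bases `X₁, …, X_r` of `E(S)` and
`Y₁, …, Y_r` of `E(T)` and an invertible linear map `N : 𝔽₂^r → 𝔽₂^r` such that
`|v_X(a)| = |v_Y(N a)|` for every `a ∈ 𝔽₂^r` (a cardinality-preserving linear bijection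
between the Venn regions of `S` w.r.t. `E(S)` and those of `T` w.r.t. `E(T)`). -/
theorem stmt_16 (n : ℕ) (S T : Finset (Fin n → ZMod 2)) :
    (∃ (L : (Fin n → ZMod 2) ≃ₗ[ZMod 2] (Fin n → ZMod 2)) (c : Fin n → ZMod 2),
        S.image (fun x => L x + c) = T) ↔
      (∃ (r : ℕ) (X Y : Fin r → Finset (Fin n → ZMod 2))
          (N : (Fin r → ZMod 2) ≃ₗ[ZMod 2] (Fin r → ZMod 2)),
        (Set.range (zSet X) = evenZeroSums S ∧ Function.Injective (zSet X)) ∧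
        (Set.range (zSet Y) = evenZeroSums T ∧ Function.Injective (zSet Y)) ∧
        ∀ a : Fin r → ZMod 2,
          (vennRegion S X a).card = (vennRegion T Y (N a)).card) := by
  constructor
  · rintro ⟨L, c, rfl⟩
    obtain ⟨r, X, hX, hXi⟩ := exists_basis S
    let f : (Fin n → ZMod 2) ≃ (Fin n → ZMod 2) := L.toEquiv.trans (Equiv.addRight c)
    have hf : (fun x => L x + c) = f := rfl
    refine ⟨r, X, fun i => (X i).image f, LinearEquiv.refl _ _, ⟨hX, hXi⟩, ⟨?_, ?_⟩, ?_⟩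
    · ext B
      constructor
      · rintro ⟨a, rfl⟩
        rw [zSet_image, ← hf, image_mem_evenZeroSums, ← hX]
        exact ⟨a, rfl⟩
      · intro hB
        have hB' : (B.image f.symm).image f = B := by simp [Finset.image_image]
        rw [← hB', ← hf, image_mem_evenZeroSums, ← hX] at hB
        obtain ⟨a, ha⟩ := hB
        exact ⟨a, by rw [zSet_image, ha, hB']⟩
    · intro a a' h
      simp only [zSet_image] at h
      exact hXi (Finset.image_injective f.injective h)
    · intro a
      rw [← Finset.card_image_of_injective _ f.injective, hf]
      congr 1
      ext y
      obtain ⟨x, rfl⟩ := f.surjective y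
      simp [vennRegion, Finset.mem_image]
  · rintro ⟨r, X, Y, N, ⟨hX, -⟩, ⟨hY, -⟩, hcard⟩
    obtain ⟨φ, hφ⟩ := exists_equiv_label N hcard
    rcases S.eq_empty_or_nonempty with hS | ⟨x₀, hx₀⟩
    · refine ⟨LinearEquiv.refl _ _, 0, ?_⟩
      have hT : T.card = S.card := by simpa using (Fintype.card_congr φ).symm
      rw [hS, Finset.card_empty, Finset.card_eq_zero] at hT
      simp [hS, hT]
    let s₀ : S := ⟨x₀, hx₀⟩
    let f := Fintype.linearCombination (ZMod 2) fun s : S => (s : Fin n → ZMod 2) - s₀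
    let g := Fintype.linearCombination (ZMod 2) fun s : S => (φ s : Fin n → ZMod 2) - φ s₀
    have hker : LinearMap.ker f = LinearMap.ker g := by
      apply le_antisymm
      · intro c hc
        exact ker_le φ (transfer hX hY N φ hφ) s₀ c hc
      · intro c hc
        have hφ' : ∀ t : T, label X (φ.symm t) = N.symm (label Y t) := by
          intro t
          rw [LinearEquiv.eq_symm_apply, ← hφ, φ.apply_symm_apply]
        have hc' : ∑ s, c s • ((φ s : Fin n → ZMod 2) - φ s₀) = 0 := hc
        rw [← φ.symm.sum_comp] at hc'
        simp only [φ.apply_symm_apply] at hc'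
        have h := ker_le φ.symm (transfer hY hX N.symm φ.symm hφ') (φ s₀)
          (fun t => c (φ.symm t)) hc'
        rw [← φ.sum_comp] at h
        simp only [φ.symm_apply_apply] at h
        exact h
    obtain ⟨L, hL⟩ := exists_equiv_of_ker_eq f g hker
    have hLs : ∀ s : S, L s + ((φ s₀ : Fin n → ZMod 2) - L s₀) = φ s := by
      intro s
      have h := hL (Pi.single s 1)
      simp only [f, g, Fintype.linearCombination_apply_single, one_smul, map_sub] at h
      rw [eq_sub_iff_add_eq] at h
      rw [← h]
      abel
    refine ⟨L, (φ s₀ : Fin n → ZMod 2) - L s₀, ?_⟩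
    ext y
    rw [Finset.mem_image]
    constructor
    · rintro ⟨x, hx, rfl⟩
      rw [hLs ⟨x, hx⟩]
      exact (φ ⟨x, hx⟩).2
    · intro hy
      exact ⟨φ.symm ⟨y, hy⟩, (φ.symm ⟨y, hy⟩).2, by rw [hLs]; simp⟩
end

section
/- Let S ⊆ 𝔽₂ⁿ with |S| = k and dim(S) = k − 3, fix a basis X₁, X₂ of E(S), and let a ≤ b ≤ c be the cardinalities of the three Venn regions v_X(10), v_X(01), v_X(11) (the Venn regions other than the isolated point set v_X(0)), listed in nondecreasing order. Then S is a cap if and only if a + b ≥ 6, a + c ≥ 6, and b + c ≥ 6. -/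
/-!
The nonempty members of `E(S)` are `X₁`, `X₂` and `X₁ ∆ X₂`, and each is the disjoint union of
two of the three Venn regions `v(10)`, `v(01)`, `v(11)`, so their sizes are the three pairwise
sums of `a`, `b`, `c` (`card_venn_add`). A nonempty even zero-sum set cannot have exactly two
elements, because two distinct vectors of `𝔽₂ⁿ` do not sum to zero; hence it has at least four,
and exactly four precisely when it witnesses that `S` is not a cap. By parity, `S` is a cap iff
every nonempty member of `E(S)` has at least six elements (`isCap_iff`).
-/

open scoped symmDiff

/-- The dimension of a subset `S ⊆ 𝔽₂ⁿ`: the dimension of its affine span. -/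
noncomputable def affDim {n : ℕ} (S : Finset (Fin n → ZMod 2)) : ℕ :=
  Module.finrank (ZMod 2) (affineSpan (ZMod 2) (S : Set (Fin n → ZMod 2))).direction

/-- A subset `S ⊆ 𝔽₂ⁿ` is a cap (Sidon set) if no four distinct elements of `S` sum to
the zero vector. -/
def IsCap {n : ℕ} (S : Finset (Fin n → ZMod 2)) : Prop :=
  ∀ w ∈ S, ∀ x ∈ S, ∀ y ∈ S, ∀ z ∈ S,
    w ≠ x → w ≠ y → w ≠ z → x ≠ y → x ≠ z → y ≠ z → w + x + y + z ≠ 0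

theorem isCap_iff {n : ℕ} (S : Finset (Fin n → ZMod 2)) :
    IsCap S ↔ ∀ Y ∈ evenZeroSums S, Y ≠ ∅ → 6 ≤ Y.card := by
  constructor
  · rintro h Y ⟨hYS, ⟨m, hm⟩, hY0⟩ hne
    by_contra hlt
    have hpos : 0 < Y.card := Finset.card_pos.2 (Finset.nonempty_iff_ne_empty.2 hne)
    obtain h2 | h4 : Y.card = 2 ∨ Y.card = 4 := by omega
    · obtain ⟨x, y, hxy, rfl⟩ := Finset.card_eq_two.1 h2
      rw [Finset.sum_pair hxy] at hY0
      apply hxy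
      funext i
      have hi : x i + y i = 0 := congrFun hY0 i
      exact CharTwo.add_eq_zero.1 hi
    · obtain ⟨w, T, hwT, rfl, hT⟩ := Finset.card_eq_succ.1 h4
      obtain ⟨x, y, z, hxy, hxz, hyz, rfl⟩ := Finset.card_eq_three.1 hT
      simp only [Finset.mem_insert, Finset.mem_singleton, not_or] at hwT
      obtain ⟨hwx, hwy, hwz⟩ := hwT
      refine h w (hYS (by simp)) x (hYS (by simp)) y (hYS (by simp)) z (hYS (by simp))
        hwx hwy hwz hxy hxz hyz ?_
      rw [Finset.sum_insert (by simp [*]), Finset.sum_insert (by simp [*]),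
        Finset.sum_pair hyz] at hY0
      rw [← hY0]
      abel
  · intro h w hw x hx y hy z hz hwx hwy hwz hxy hxz hyz h0
    have hc : ({w, x, y, z} : Finset (Fin n → ZMod 2)).card = 4 := by
      rw [Finset.card_insert_of_notMem (by simp [*]), Finset.card_insert_of_notMem (by simp [*]),
        Finset.card_pair hyz]
    have h6 := h {w, x, y, z} ⟨?_, ?_, ?_⟩ (Finset.insert_ne_empty _ _)
    · omega
    · intro u hu
      simp only [Finset.mem_insert, Finset.mem_singleton] at hu
      rcases hu with rfl | rfl | rfl | rfl <;> assumption
    · rw [hc]; decide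
    · rw [Finset.sum_insert (by simp [*]), Finset.sum_insert (by simp [*]),
        Finset.sum_pair hyz, ← h0]
      abel

theorem zSet_two {α : Type*} [DecidableEq α] (X : Fin 2 → Finset α) :
    zSet X 0 = ∅ ∧ zSet X ![1, 0] = X 0 ∧ zSet X ![0, 1] = X 1 ∧
      zSet X ![1, 1] = X 0 ∆ X 1 := by
  have h0 : Finset.univ.filter (fun i : Fin 2 => (0 : Fin 2 → ZMod 2) i = 1) = ∅ := by decide
  have h1 : Finset.univ.filter (fun i => (![1, 0] : Fin 2 → ZMod 2) i = 1) = {0} := by decide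
  have h2 : Finset.univ.filter (fun i => (![0, 1] : Fin 2 → ZMod 2) i = 1) = {1} := by decide
  have h3 : Finset.univ.filter (fun i => (![1, 1] : Fin 2 → ZMod 2) i = 1) = {0, 1} := by decide
  unfold zSet
  rw [h0, h1, h2, h3, Finset.fold_insert (by decide)]
  simp

/-- The three nontrivial combinations of two subsets of `S` are the disjoint unions of pairs of
nontrivial Venn regions. -/
theorem card_venn_add {α : Type*} [DecidableEq α] (S : Finset α) (X : Fin 2 → Finset α)
    (h0 : X 0 ⊆ S) (h1 : X 1 ⊆ S) :
    (X 0).card = (vennRegion S X ![1, 0]).card + (vennRegion S X ![1, 1]).card ∧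
    (X 1).card = (vennRegion S X ![0, 1]).card + (vennRegion S X ![1, 1]).card ∧
    (X 0 ∆ X 1).card = (vennRegion S X ![1, 0]).card + (vennRegion S X ![0, 1]).card := by
  have e1 : vennRegion S X ![1, 0] = X 0 \ X 1 := by
    ext x
    have := @h0 x
    simp [vennRegion, Fin.forall_fin_two]
    tauto
  have e2 : vennRegion S X ![0, 1] = X 1 \ X 0 := by
    ext x
    have := @h1 x
    simp [vennRegion, Fin.forall_fin_two]
    tauto
  have e3 : vennRegion S X ![1, 1] = X 0 ∩ X 1 := by
    ext x
    have := @h0 x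
    simp [vennRegion, Fin.forall_fin_two]
    tauto
  rw [e1, e2, e3]
  refine ⟨(Finset.card_sdiff_add_card_inter _ _).symm, ?_, ?_⟩
  · rw [Finset.inter_comm, Finset.card_sdiff_add_card_inter]
  · exact Finset.card_union_of_disjoint disjoint_sdiff_sdiff

/-- Let `S ⊆ 𝔽₂ⁿ` with `|S| = k` and `dim S = k − 3`, fix a basis `X₁, X₂` of `E(S)`,
and let `a ≤ b ≤ c` be the cardinalities of the three Venn regions `v_X(10), v_X(01),
v_X(11)` (those other than the isolated point set `v_X(0)`) listed in nondecreasing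
order.  Then `S` is a cap if and only if `a + b ≥ 6`, `a + c ≥ 6`, and `b + c ≥ 6`. -/
theorem stmt_18 (n k : ℕ) (S : Finset (Fin n → ZMod 2))
    (hSk : S.card = k) (hSd : affDim S = k - 3)
    (X : Fin 2 → Finset (Fin n → ZMod 2))
    (hX : Set.range (zSet X) = evenZeroSums S ∧ Function.Injective (zSet X))
    (a b c : ℕ) (hab : a ≤ b) (hbc : b ≤ c)
    (habc : ({a, b, c} : Multiset ℕ) =
      {(vennRegion S X ![1, 0]).card, (vennRegion S X ![0, 1]).card,
        (vennRegion S X ![1, 1]).card}) :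
    IsCap S ↔ (6 ≤ a + b ∧ 6 ≤ a + c ∧ 6 ≤ b + c) := by
  obtain ⟨hr, hinj⟩ := hX
  obtain ⟨z0, z1, z2, z3⟩ := zSet_two X
  have hmem : ∀ v, zSet X v ∈ evenZeroSums S := fun v => hr ▸ Set.mem_range_self v
  have hne : ∀ v, v ≠ 0 → zSet X v ≠ ∅ := fun v hv h => hv (hinj (h.trans z0.symm))
  have hvec : ∀ v : Fin 2 → ZMod 2, v = 0 ∨ v = ![1, 0] ∨ v = ![0, 1] ∨ v = ![1, 1] := by
    decide
  obtain ⟨c1, c2, c3⟩ := card_venn_add S X (z1 ▸ (hmem ![1, 0]).1) (z2 ▸ (hmem ![0, 1]).1)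
  have hcap : IsCap S ↔ 6 ≤ (X 0).card ∧ 6 ≤ (X 1).card ∧ 6 ≤ (X 0 ∆ X 1).card := by
    rw [isCap_iff]
    constructor
    · intro h
      refine ⟨?_, ?_, ?_⟩
      · exact z1 ▸ h _ (hmem ![1, 0]) (hne _ (by decide))
      · exact z2 ▸ h _ (hmem ![0, 1]) (hne _ (by decide))
      · exact z3 ▸ h _ (hmem ![1, 1]) (hne _ (by decide))
    · rintro ⟨h1, h2, h3⟩ Y hY hY0
      rw [← hr] at hY
      obtain ⟨v, rfl⟩ := hY
      rcases hvec v with rfl | rfl | rfl | rfl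
      · exact absurd z0 hY0
      · rwa [z1]
      · rwa [z2]
      · rwa [z3]
  -- That every pairwise sum is at least 6 is a symmetric condition, expressed here through the
  -- multiset alone, so that the order in which the regions are listed is irrelevant.
  have key : ∀ p q r : ℕ, (6 ≤ p + q ∧ 6 ≤ p + r ∧ 6 ≤ q + r) ↔
      ∀ x ∈ ({p, q, r} : Multiset ℕ), x + 6 ≤ ({p, q, r} : Multiset ℕ).sum := by
    intro p q r
    simp
    omega
  rw [hcap, c1, c2, c3, key a b c, habc, ← key]
  omega
end
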